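/- Let R be an associative ring with identity and Q a quiver. For every X ∈ Rep(Q,R), every Y ∈ Rep(Q^op,R^op), and every abelian group G, there is a natural isomorphism Hom_{Rep(Q^op,R^op)}(Y, Hom(X,G)) ≅ Hom_{Rep(Q,R)}(X, Hom(Y,G)), induced vertexwise by the swap isomorphisms Hom_{R^op}(Y(i), Hom_Z(X(i),G)) ≅ Hom_R(X(i), Hom_Z(Y(i),G)). -/

import Mathlib

open CategoryTheory CategoryTheory.Limits Opposite
open scoped DirectSum

universe w v u

namespace QuiverGF


section Cat

variable {A : Type u} [Category.{v} A] [Abelian A]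

/-- `Ext¹(X,Y) = 0`, expressed as: every short exact sequence `0 → Y → E → X → 0` splits. -/
def ext1Zero (X Y : A) : Prop :=
  ∀ (E : A) (f : Y ⟶ E) (g : E ⟶ X) (w : f ≫ g = 0),
    (ShortComplex.mk f g w).ShortExact → ∃ s : X ⟶ E, s ≫ g = 𝟙 X

/-- `extHigherZero n X Y` encodes `Ext^{n+1}(X,Y) = 0`, defined by dimension shifting along
short exact sequences `0 → Y → I → Z → 0` with `I` injective. -/
def extHigherZero : ℕ → A → A → Prop
  | 0 => fun X Y => ext1Zero X Y
  | n + 1 => fun X Y => ∀ (I Z : A) (f : Y ⟶ I) (g : I ⟶ Z) (w : f ≫ g = 0),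
      Injective I → (ShortComplex.mk f g w).ShortExact → extHigherZero n X Z

/-- The right `Ext¹`-orthogonal class. -/
def rightPerp (S : Set A) : Set A := {Y | ∀ X ∈ S, ext1Zero X Y}

/-- The left `Ext¹`-orthogonal class. -/
def leftPerp (S : Set A) : Set A := {X | ∀ Y ∈ S, ext1Zero X Y}

/-- `(X, Y)` is a cotorsion pair. -/
structure IsCotorsionPair (X Y : Set A) : Prop where
  right_eq : Y = rightPerp X
  left_eq : X = leftPerp Y

/-- Completeness of a pair of classes: every object admits approximation sequences. -/
def IsCompleteCP (X Y : Set A) : Prop :=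
  (∀ M : A, ∃ (YM XM : A) (f : M ⟶ YM) (g : YM ⟶ XM) (w : f ≫ g = 0),
     (ShortComplex.mk f g w).ShortExact ∧ YM ∈ Y ∧ XM ∈ X) ∧
  (∀ M : A, ∃ (YM XM : A) (f : YM ⟶ XM) (g : XM ⟶ M) (w : f ≫ g = 0),
     (ShortComplex.mk f g w).ShortExact ∧ YM ∈ Y ∧ XM ∈ X)

/-- Heredity: `Ext^i(X,Y) = 0` for all `i ≥ 1`. -/
def IsHereditaryCP (X Y : Set A) : Prop :=
  ∀ M ∈ X, ∀ N ∈ Y, ∀ n : ℕ, extHigherZero n M N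

/-- A thick class of objects. -/
structure IsThick (W : Set A) : Prop where
  summand : ∀ Z ∈ W, ∀ (X : A) (i : X ⟶ Z) (r : Z ⟶ X), i ≫ r = 𝟙 X → X ∈ W
  ext_closed : ∀ (S : ShortComplex A), S.ShortExact → S.X₁ ∈ W → S.X₃ ∈ W → S.X₂ ∈ W
  ker_epi : ∀ (S : ShortComplex A), S.ShortExact → S.X₂ ∈ W → S.X₃ ∈ W → S.X₁ ∈ W
  coker_mono : ∀ (S : ShortComplex A), S.ShortExact → S.X₁ ∈ W → S.X₂ ∈ W → S.X₃ ∈ W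

/-- A Hovey triple. -/
structure IsHoveyTriple (C W F : Set A) : Prop where
  thick : IsThick W
  cp1 : IsCotorsionPair C (W ∩ F)
  cp1_complete : IsCompleteCP C (W ∩ F)
  cp2 : IsCotorsionPair (C ∩ W) F
  cp2_complete : IsCompleteCP (C ∩ W) F

/-- A hereditary Hovey triple. -/
structure IsHereditaryHoveyTriple (C W F : Set A) extends IsHoveyTriple C W F : Prop where
  cp1_hereditary : IsHereditaryCP C (W ∩ F)
  cp2_hereditary : IsHereditaryCP (C ∩ W) F

/-- `f : C ⟶ M` is an `S`-cover of `M`. -/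
def IsCover (S : Set A) {C M : A} (f : C ⟶ M) : Prop :=
  C ∈ S ∧ (∀ C' ∈ S, ∀ g : C' ⟶ M, ∃ h : C' ⟶ C, h ≫ f = g) ∧
    (∀ h : C ⟶ C, h ≫ f = f → IsIso h)

/-- `f : M ⟶ E` is an `S`-envelope of `M`. -/
def IsEnvelope (S : Set A) {M E : A} (f : M ⟶ E) : Prop :=
  E ∈ S ∧ (∀ E' ∈ S, ∀ g : M ⟶ E', ∃ h : E ⟶ E', f ≫ h = g) ∧
    (∀ h : E ⟶ E, f ≫ h = f → IsIso h)

/-- A perfect pair of classes: X-covers and Y-envelopes always exist. -/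
def IsPerfectCP (X Y : Set A) : Prop :=
  (∀ M : A, ∃ (C : A) (f : C ⟶ M), IsCover X f) ∧
  (∀ M : A, ∃ (E : A) (f : M ⟶ E), IsEnvelope Y f)

/-- `W` is a cogenerator for `X`. -/
def IsCogenerator (W X : Set A) : Prop :=
  W ⊆ X ∧ ∀ M ∈ X, ∃ (W' X' : A) (f : M ⟶ W') (g : W' ⟶ X') (w : f ≫ g = 0),
    (ShortComplex.mk f g w).ShortExact ∧ W' ∈ W ∧ X' ∈ X

end Cat

section Quiver

variable (V : Type w) [Quiver.{w} V]

/-- A quiver is left rooted if it has no infinite sequence of arrows `• → • → • → ⋯`. -/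
def LeftRooted : Prop := ¬ ∃ f : ℕ → V, ∀ n : ℕ, Nonempty (f n ⟶ f (n + 1))

variable {V}
variable {A : Type u} [Category.{v} A]

/-- A vertex of `V`, seen as an object of the path category. -/
abbrev vtx (i : V) : Paths V := i

section Phi

variable [Abelian A] [HasCoproducts.{w} A]

/-- The canonical morphism `φᵢˣ : ⊕_{a : j ⟶ i} X(j) ⟶ X(i)`. -/
noncomputable def phi (X : Paths V ⥤ A) (i : V) :
    (∐ fun p : Σ j : V, j ⟶ i => X.obj (vtx p.1)) ⟶ X.obj (vtx i) :=
  Sigma.desc fun p => X.map p.2.toPath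

/-- The class `Φ(S)` of representations. -/
noncomputable def PhiClass (S : Set A) : Set (Paths V ⥤ A) :=
  {X | ∀ i : V, Mono (phi X i) ∧ X.obj (vtx i) ∈ S ∧ cokernel (phi X i) ∈ S}

end Phi

/-- The class of representations with all vertex values in `S`. -/
def RepClass (S : Set A) : Set (Paths V ⥤ A) := {X | ∀ i : V, X.obj (vtx i) ∈ S}

section Psi

variable [Abelian A] [HasProducts.{w} A]

/-- The canonical morphism `ψᵢʸ : Y(i) ⟶ Π_{a : i ⟶ j} Y(j)`. -/
noncomputable def psi (Y : Paths V ⥤ A) (i : V) :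
    Y.obj (vtx i) ⟶ ∏ᶜ fun p : Σ j : V, i ⟶ j => Y.obj (vtx p.1) :=
  Pi.lift fun p => Y.map p.2.toPath

/-- The class `Ψ(S)` of representations. -/
noncomputable def PsiClass (S : Set A) : Set (Paths V ⥤ A) :=
  {Y | ∀ i : V, Epi (psi Y i) ∧ Y.obj (vtx i) ∈ S ∧ kernel (psi Y i) ∈ S}

end Psi

end Quiver




section NcTensor

variable (R : Type u) [Ring R]

variable (E : Type u) [AddCommGroup E] [Module Rᵐᵒᵖ E]
variable (M : Type u) [AddCommGroup M] [Module R M]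

/-- The defining relations of the tensor product `E ⊗_R M` of a right `R`-module `E`
and a left `R`-module `M` over a (possibly noncommutative) ring `R`. -/
def ncRel : Submodule ℤ (TensorProduct ℤ E M) :=
  Submodule.span ℤ {z | ∃ (e : E) (r : R) (m : M),
    z = (MulOpposite.op r • e) ⊗ₜ[ℤ] m - e ⊗ₜ[ℤ] (r • m)}

/-- The tensor product `E ⊗_R M` of a right `R`-module `E` and a left `R`-module `M`. -/
abbrev NcTensor := TensorProduct ℤ E M ⧸ ncRel R E M

/-- The canonical generator `e ⊗ m` of `E ⊗_R M`. -/
noncomputable def NcTensor.tmul (e : E) (m : M) : NcTensor R E M :=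
  Submodule.Quotient.mk (e ⊗ₜ[ℤ] m)

variable {E M}
variable {E' : Type u} [AddCommGroup E'] [Module Rᵐᵒᵖ E']
variable {M' : Type u} [AddCommGroup M'] [Module R M']

/-- Functoriality of the tensor product. -/
noncomputable def NcTensor.map (f : E →ₗ[Rᵐᵒᵖ] E') (g : M →ₗ[R] M') :
    NcTensor R E M →ₗ[ℤ] NcTensor R E' M' :=
  Submodule.mapQ _ _
    (TensorProduct.map f.toAddMonoidHom.toIntLinearMap g.toAddMonoidHom.toIntLinearMap)
    (by
      refine Submodule.span_le.2 ?_
      rintro z ⟨e, r, m, rfl⟩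
      refine Submodule.mem_comap.2 (Submodule.subset_span ?_)
      refine ⟨f e, r, g m, ?_⟩
      refine (map_sub (TensorProduct.map f.toAddMonoidHom.toIntLinearMap
        g.toAddMonoidHom.toIntLinearMap) _ _).trans ?_
      rw [TensorProduct.map_tmul, TensorProduct.map_tmul]
      exact congrArg₂ (fun a b => a ⊗ₜ[ℤ] g m - f e ⊗ₜ[ℤ] b)
        (map_smul f (MulOpposite.op r) e) (map_smul g r m))

@[simp] lemma NcTensor.map_tmul (f : E →ₗ[Rᵐᵒᵖ] E') (g : M →ₗ[R] M') (e : E) (m : M) :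
    NcTensor.map R f g (NcTensor.tmul R E M e m) = NcTensor.tmul R E' M' (f e) (g m) := by
  rfl

end NcTensor

section ModuleClasses

variable (R : Type u) [Ring R]

/-- A left `R`-module is flat if tensoring with it preserves injections of right `R`-modules. -/
def IsFlatModule (M : ModuleCat.{u} R) : Prop :=
  ∀ (E E' : ModuleCat.{u} Rᵐᵒᵖ) (f : E ⟶ E'), Function.Injective f →
    Function.Injective (NcTensor.map R (f.hom : ↑E →ₗ[Rᵐᵒᵖ] ↑E') (LinearMap.id (M := ↑M)))

/-- Gorenstein flat left `R`-modules: cycles of exact complexes of flat modules which stay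
exact after tensoring with any injective right `R`-module. -/
def IsGorensteinFlatModule (M : ModuleCat.{u} R) : Prop :=
  ∃ (F : ℤ → ModuleCat.{u} R) (d : ∀ n : ℤ, F n ⟶ F (n + 1)),
    (∀ n, IsFlatModule R (F n)) ∧
    (∀ n, Function.Exact (d n) (d (n + 1))) ∧
    Nonempty (↑M ≃ₗ[R] ↥(LinearMap.ker ((d 0).hom : ↑(F 0) →ₗ[R] ↑(F (0 + 1))))) ∧
    ∀ (E : ModuleCat.{u} Rᵐᵒᵖ), Injective E → ∀ n : ℤ,
      Function.Exact (NcTensor.map R (LinearMap.id (M := ↑E)) ((d n).hom : ↑(F n) →ₗ[R] ↑(F (n + 1))))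
        (NcTensor.map R (LinearMap.id (M := ↑E)) ((d (n + 1)).hom : ↑(F (n + 1)) →ₗ[R] ↑(F (n + 1 + 1))))

/-- Projectively coresolved Gorenstein flat left `R`-modules. -/
def IsPGFModule (M : ModuleCat.{u} R) : Prop :=
  ∃ (P : ℤ → ModuleCat.{u} R) (d : ∀ n : ℤ, P n ⟶ P (n + 1)),
    (∀ n, Projective (P n)) ∧
    (∀ n, Function.Exact (d n) (d (n + 1))) ∧
    Nonempty (↑M ≃ₗ[R] ↥(LinearMap.ker ((d 0).hom : ↑(P 0) →ₗ[R] ↑(P (0 + 1))))) ∧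
    ∀ (E : ModuleCat.{u} Rᵐᵒᵖ), Injective E → ∀ n : ℤ,
      Function.Exact (NcTensor.map R (LinearMap.id (M := ↑E)) ((d n).hom : ↑(P n) →ₗ[R] ↑(P (n + 1))))
        (NcTensor.map R (LinearMap.id (M := ↑E)) ((d (n + 1)).hom : ↑(P (n + 1)) →ₗ[R] ↑(P (n + 1 + 1))))

/-- Gorenstein injective objects of an abelian category. -/
def IsGorensteinInjective {A : Type*} [Category A] [Abelian A] (M : A) : Prop :=
  ∃ (I : ℤ → A) (d : ∀ n : ℤ, I n ⟶ I (n + 1)),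
    (∀ n, Injective (I n)) ∧
    (∀ n, ∃ w : d n ≫ d (n + 1) = 0, (ShortComplex.mk (d n) (d (n + 1)) w).Exact) ∧
    Nonempty (M ≅ kernel (d 0)) ∧
    ∀ (E : A), Injective E → ∀ n : ℤ,
      Function.Exact (fun f : E ⟶ I n => f ≫ d n) (fun f : E ⟶ I (n + 1) => f ≫ d (n + 1))

end ModuleClasses



section Char

variable (R : Type u) [Ring R] (G : Type u) [AddCommGroup G]

section Left
variable (M : Type u) [AddCommGroup M] [Module R M]

/-- Right `R`-action on `Hom_ℤ(M, G)` for a left `R`-module `M`. -/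
instance : SMul Rᵐᵒᵖ (M →+ G) :=
  ⟨fun r f => f.comp (DistribMulAction.toAddMonoidHom M r.unop)⟩

@[simp] lemma op_smul_addHom_apply (r : Rᵐᵒᵖ) (f : M →+ G) (m : M) :
    (r • f) m = f (r.unop • m) := rfl

instance charRight : Module Rᵐᵒᵖ (M →+ G) where
  one_smul f := AddMonoidHom.ext fun m => by simp
  mul_smul r s f := AddMonoidHom.ext fun m => by simp [mul_smul]
  smul_zero r := AddMonoidHom.ext fun m => rfl
  smul_add r f g := AddMonoidHom.ext fun m => rfl
  add_smul r s f := AddMonoidHom.ext fun m => by simp [add_smul]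
  zero_smul f := AddMonoidHom.ext fun m => by simp

end Left

section Right
variable (N : Type u) [AddCommGroup N] [Module Rᵐᵒᵖ N]

/-- Left `R`-action on `Hom_ℤ(N, G)` for a right `R`-module `N`. -/
instance : SMul R (N →+ G) :=
  ⟨fun r f => f.comp (DistribMulAction.toAddMonoidHom N (MulOpposite.op r))⟩

@[simp] lemma smul_addHom_apply (r : R) (f : N →+ G) (n : N) :
    (r • f) n = f (MulOpposite.op r • n) := rfl

instance charLeft : Module R (N →+ G) where
  one_smul f := AddMonoidHom.ext fun n => by simp
  mul_smul r s f := AddMonoidHom.ext fun n => by simp [MulOpposite.op_mul, mul_smul]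
  smul_zero r := AddMonoidHom.ext fun n => rfl
  smul_add r f g := AddMonoidHom.ext fun n => rfl
  add_smul r s f := AddMonoidHom.ext fun n => by simp [add_smul]
  zero_smul f := AddMonoidHom.ext fun n => by simp

end Right

section Precomp

variable {R G}
variable {M N : Type u} [AddCommGroup M] [AddCommGroup N] [Module R M] [Module R N]

/-- Precomposition, as an `Rᵐᵒᵖ`-linear map between character modules. -/
def precompHom (h : M →ₗ[R] N) : (N →+ G) →ₗ[Rᵐᵒᵖ] (M →+ G) where
  toFun f := f.comp h.toAddMonoidHom
  map_add' f g := rfl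
  map_smul' r f := AddMonoidHom.ext fun m => by simp [map_smul]

variable {P Q : Type u} [AddCommGroup P] [AddCommGroup Q] [Module Rᵐᵒᵖ P] [Module Rᵐᵒᵖ Q]

/-- Precomposition, as an `R`-linear map between character modules of right modules. -/
def precompHomOp (h : P →ₗ[Rᵐᵒᵖ] Q) : (Q →+ G) →ₗ[R] (P →+ G) where
  toFun f := f.comp h.toAddMonoidHom
  map_add' f g := rfl
  map_smul' r f := AddMonoidHom.ext fun p => by simp [map_smul]

end Precomp

end Char


section Reps

variable (V : Type u) [Quiver.{u} V] (R : Type u) [Ring R]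

/-- The category of representations of the quiver `V` with values in left `R`-modules. -/
abbrev RepL := Paths V ⥤ ModuleCat.{u} R

/-- The category of representations of the opposite quiver with values in right `R`-modules. -/
abbrev RepR := Paths Vᵒᵖ ⥤ ModuleCat.{u} Rᵐᵒᵖ

/-- A vertex of `V`, seen as an object of the path category. -/
abbrev vtx' {V : Type u} [Quiver.{u} V] (i : V) : Paths V := i

/-- The representation `Hom(X, G) ∈ Rep(Qᵒᵖ, Rᵒᵖ)`, given vertexwise by `Hom_ℤ(X(i), G)`. -/
noncomputable def HomRepObj (X : RepL V R) (G : Type u) [AddCommGroup G] : RepR V R :=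
  Paths.lift
    { obj := fun x => ModuleCat.of Rᵐᵒᵖ (↑(X.obj (vtx' x.unop)) →+ G)
      map := fun {x y} a =>
        ModuleCat.ofHom (precompHom (G := G) ((X.map a.unop.toPath).hom : ↑(X.obj (vtx' y.unop)) →ₗ[R] ↑(X.obj (vtx' x.unop))) :
          _ →ₗ[Rᵐᵒᵖ] _) }

/-- The representation `Hom(Y, G) ∈ Rep(Q, R)` for `Y ∈ Rep(Qᵒᵖ, Rᵒᵖ)`. -/
noncomputable def HomRepObjOp (Y : RepR V R) (G : Type u) [AddCommGroup G] : RepL V R :=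
  Paths.lift
    { obj := fun i => ModuleCat.of R (↑(Y.obj (vtx' (op i))) →+ G)
      map := fun {i j} a =>
        ModuleCat.ofHom (precompHomOp (G := G) ((Y.map a.op.toPath).hom : ↑(Y.obj (vtx' (op j))) →ₗ[Rᵐᵒᵖ] ↑(Y.obj (vtx' (op i)))) :
          _ →ₗ[R] _) }

/-- The character representation `X⁺ = Hom(X, ℚ/ℤ)`. -/
noncomputable def charRep (X : RepL V R) : RepR V R :=
  HomRepObj V R X (ULift.{u} (AddCircle (1 : ℚ)))

section Tensor

variable {V R}

/-- The underlying group of the tensor product of representations before dividing out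
by the relations coming from arrows. -/
noncomputable abbrev repTensorBase (Y : RepR V R) (X : RepL V R) : Type u :=
  ⨁ (i : V), NcTensor R (↑(Y.obj (vtx' (op i)))) (↑(X.obj (vtx' i)))

open scoped Classical in
/-- The relations defining the tensor product of representations. -/
noncomputable def repTensorRel (Y : RepR V R) (X : RepL V R) :
    @Submodule ℤ (repTensorBase Y X) _ AddCommGroup.toAddCommMonoid _ :=
  Submodule.span ℤ {z | ∃ (i j : V) (a : i ⟶ j) (y : ↑(Y.obj (vtx' (op j)))) (x : ↑(X.obj (vtx' i))),
    z = DirectSum.of _ i (NcTensor.tmul R _ _ (Y.map a.op.toPath y) x)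
      - DirectSum.of _ j (NcTensor.tmul R _ _ y (X.map a.toPath x))}

/-- The tensor product `Y ⊗_Q X` of representations, for `Y ∈ Rep(Qᵒᵖ, Rᵒᵖ)` and
`X ∈ Rep(Q, R)`. -/
noncomputable abbrev RepTensor (Y : RepR V R) (X : RepL V R) : Type u :=
  repTensorBase Y X ⧸ repTensorRel Y X

open scoped Classical in
/-- Functoriality of the tensor product of representations. -/
noncomputable def RepTensor.map {Y Y' : RepR V R} {X X' : RepL V R}
    (g : Y ⟶ Y') (f : X ⟶ X') : RepTensor Y X →ₗ[ℤ] RepTensor Y' X' :=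
  Submodule.mapQ _ _
    (DirectSum.toModule ℤ V (repTensorBase Y' X') fun i =>
      (DirectSum.lof ℤ V _ i).comp
        (NcTensor.map R ((g.app (vtx' (op i))).hom : _ →ₗ[Rᵐᵒᵖ] _) ((f.app (vtx' i)).hom : _ →ₗ[R] _)))
    (by
      refine Submodule.span_le.2 ?_
      rintro z ⟨i, j, a, y, x, rfl⟩
      refine Submodule.mem_comap.2 ?_
      rw [map_sub, ← DirectSum.lof_eq_of ℤ, ← DirectSum.lof_eq_of ℤ,
        DirectSum.toModule_lof, DirectSum.toModule_lof]
      refine Submodule.subset_span ?_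
      refine ⟨i, j, a, g.app (vtx' (op j)) y, f.app (vtx' i) x, ?_⟩
      have hg : g.app (vtx' (op i)) (Y.map a.op.toPath y)
          = Y'.map a.op.toPath (g.app (vtx' (op j)) y) := by
        have h := g.naturality (a.op.toPath : vtx' (op j) ⟶ vtx' (op i))
        exact ConcreteCategory.congr_hom h y
      have hf : f.app (vtx' j) (X.map a.toPath x)
          = X'.map a.toPath (f.app (vtx' i) x) := by
        have h := f.naturality (a.toPath : vtx' i ⟶ vtx' j)
        exact ConcreteCategory.congr_hom h x
      simp only [LinearMap.comp_apply, NcTensor.map_tmul, DirectSum.lof_eq_of]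
      rw [hg, hf])

end Tensor

end Reps




section More

variable (V : Type u) [Quiver.{u} V] (R : Type u) [Ring R]

/-- Cotorsion left `R`-modules. -/
def IsCotorsionModule (M : ModuleCat.{u} R) : Prop :=
  ∀ F : ModuleCat.{u} R, IsFlatModule R F → ext1Zero F M

/-- A right coherent ring: every finitely generated right ideal is finitely presented. -/
def RightCoherent : Prop :=
  ∀ I : Submodule Rᵐᵒᵖ R, I.FG → Module.FinitePresentation Rᵐᵒᵖ ↥I

/-- Flat representations: colimits of projective representations. -/
def IsFlatRep (Xr : RepL V R) : Prop :=
  ∃ (J : Cat.{u, u}) (D : ↥J ⥤ RepL V R) (c : Limits.Cocone D),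
    (∀ j, Projective (D.obj j)) ∧ Nonempty (Limits.IsColimit c) ∧ Nonempty (c.pt ≅ Xr)

/-- Gorenstein flat representations. -/
def IsGorensteinFlatRep (Xr : RepL V R) : Prop :=
  ∃ (F : ℤ → RepL V R) (d : ∀ n : ℤ, F (n + 1) ⟶ F n),
    (∀ n, IsFlatRep V R (F n)) ∧
    (∀ n, ∃ w : d (n + 1) ≫ d n = 0, (ShortComplex.mk (d (n + 1)) (d n) w).Exact) ∧
    Nonempty (Xr ≅ cokernel (d 0)) ∧
    ∀ (E : RepR V R), Injective E → ∀ n : ℤ,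
      Function.Exact (RepTensor.map (𝟙 E) (d (n + 1))) (RepTensor.map (𝟙 E) (d n))

/-- Projectively coresolved Gorenstein flat representations. -/
def IsPGFRep (Xr : RepL V R) : Prop :=
  ∃ (P : ℤ → RepL V R) (d : ∀ n : ℤ, P (n + 1) ⟶ P n),
    (∀ n, Projective (P n)) ∧
    (∀ n, ∃ w : d (n + 1) ≫ d n = 0, (ShortComplex.mk (d (n + 1)) (d n) w).Exact) ∧
    Nonempty (Xr ≅ cokernel (d 0)) ∧
    ∀ (E : RepR V R), Injective E → ∀ n : ℤ,
      Function.Exact (RepTensor.map (𝟙 E) (d (n + 1))) (RepTensor.map (𝟙 E) (d n))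

end More

section Swap

variable (R : Type u) [Ring R]
variable (M : Type u) [AddCommGroup M] [Module R M]
variable (E : Type u) [AddCommGroup E] [Module Rᵐᵒᵖ E]

/-- Relations for the tensor product `M ⊗_{Rᵒᵖ} E` of a right `Rᵒᵖ`-module `M`
and a left `Rᵒᵖ`-module `E`. -/
def ncRel' : Submodule ℤ (TensorProduct ℤ M E) :=
  Submodule.span ℤ {z | ∃ (m : M) (r : R) (e : E),
    z = (r • m) ⊗ₜ[ℤ] e - m ⊗ₜ[ℤ] (MulOpposite.op r • e)}

/-- The tensor product `M ⊗_{Rᵒᵖ} E`. -/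
abbrev NcTensorSwap := TensorProduct ℤ M E ⧸ ncRel' R M E

variable {M E}

/-- The generator `m ⊗ e` of `M ⊗_{Rᵒᵖ} E`. -/
noncomputable def NcTensorSwap.tmul (m : M) (e : E) : NcTensorSwap R M E :=
  Submodule.Quotient.mk (m ⊗ₜ[ℤ] e)

variable (V : Type u) [Quiver.{u} V]

/-- The base of the tensor product `X ⊗_{Qᵒᵖ} Y`. -/
noncomputable abbrev repTensorSwapBase (X : RepL V R) (Y : RepR V R) : Type u :=
  ⨁ (i : V), NcTensorSwap R (↑(X.obj i)) (↑(Y.obj (op i)))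

open scoped Classical in
/-- The relations of the tensor product `X ⊗_{Qᵒᵖ} Y`. -/
noncomputable def repTensorSwapRel (X : RepL V R) (Y : RepR V R) :
    @Submodule ℤ (repTensorSwapBase R V X Y) _ AddCommGroup.toAddCommMonoid _ :=
  Submodule.span ℤ {z | ∃ (j i : V) (a : j ⟶ i) (x : ↑(X.obj j)) (y : ↑(Y.obj (op i))),
    z = DirectSum.of _ i (NcTensorSwap.tmul R (X.map a.toPath x) y)
      - DirectSum.of _ j (NcTensorSwap.tmul R x (Y.map a.op.toPath y))}

/-- The tensor product `X ⊗_{Qᵒᵖ} Y` of representations, i.e. the tensor product over the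
opposite quiver of the opposite ring. -/
noncomputable abbrev RepTensorSwap (X : RepL V R) (Y : RepR V R) : Type u :=
  repTensorSwapBase R V X Y ⧸ repTensorSwapRel R V X Y

end Swap

section Eval

variable {V : Type u} [Quiver.{u} V] {R : Type u} [Ring R]

/-- Evaluation helper identifying the vertex value of `Hom(X, G)` with `Hom_ℤ(X(i), G)`. -/
def homRepEval (X : RepL V R) (G : Type u) [AddCommGroup G] {v : Vᵒᵖ}
    (s : ↑((HomRepObj V R X G).obj v)) : ↑(X.obj v.unop) →+ G := s

/-- Evaluation helper identifying the vertex value of `Hom(Y, G)` with `Hom_ℤ(Y(i), G)`. -/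
def homRepOpEval (Y : RepR V R) (G : Type u) [AddCommGroup G] {i : V}
    (s : ↑((HomRepObjOp V R Y G).obj i)) : ↑(Y.obj (op i)) →+ G := s

end Eval

end QuiverGF

section Statements

open CategoryTheory CategoryTheory.Limits Opposite QuiverGF
open scoped DirectSum

/-!
By currying, a family of `Rᵐᵒᵖ`-linear maps `φᵢ : Y(i) → Hom_ℤ(X(i), G)` is a family of biadditive
`R`-balanced pairings `⟨y, x⟩ᵢ = φᵢ y x` of `Y(i)` and `X(i)` with values in `G`, and so is a family
of `R`-linear maps `X(i) → Hom_ℤ(Y(i), G)`. Under either reading, naturality along an arrow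
`a : i ⟶ j` is the adjunction identity `⟨Y(a) y, x⟩ᵢ = ⟨y, X(a) x⟩ⱼ`, and naturality along arrows
gives naturality along paths.
-/

namespace QuiverGF

section Modules

variable {R : Type u} [Ring R] {G : Type u} [AddCommGroup G]
variable {M : Type u} [AddCommGroup M] [Module R M] {N : Type u} [AddCommGroup N] [Module R N]
variable {E : Type u} [AddCommGroup E] [Module Rᵐᵒᵖ E]
variable {F : Type u} [AddCommGroup F] [Module Rᵐᵒᵖ F]

/-- The swap isomorphism `Hom_{Rᵐᵒᵖ}(E, Hom_ℤ(M, G)) ≃ Hom_R(M, Hom_ℤ(E, G))`, which exchanges the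
two arguments of a biadditive `R`-balanced pairing. -/
def linearSwap : (E →ₗ[Rᵐᵒᵖ] (M →+ G)) ≃+ (M →ₗ[R] (E →+ G)) where
  toFun φ :=
    { φ.toAddMonoidHom.flip with
      map_smul' := fun r m => AddMonoidHom.ext fun e =>
        (DFunLike.congr_fun (φ.map_smul (MulOpposite.op r) e) m).symm }
  invFun ψ :=
    { ψ.toAddMonoidHom.flip with
      map_smul' := fun r e => AddMonoidHom.ext fun m =>
        (DFunLike.congr_fun (ψ.map_smul r.unop m) e).symm }
  left_inv _ := rfl
  right_inv _ := rfl
  map_add' _ _ := rfl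

lemma linearSwap_apply (φ : E →ₗ[Rᵐᵒᵖ] (M →+ G)) (m : M) (e : E) :
    linearSwap φ m e = φ e m := rfl

lemma comp_eq_precompHom_comp_iff (h : M →ₗ[R] N) (k : F →ₗ[Rᵐᵒᵖ] E)
    (φ : E →ₗ[Rᵐᵒᵖ] (M →+ G)) (ψ : F →ₗ[Rᵐᵒᵖ] (N →+ G)) :
    φ ∘ₗ k = precompHom h ∘ₗ ψ ↔ ∀ y x, φ (k y) x = ψ y (h x) := by
  simp only [DFunLike.ext_iff]
  rfl

lemma comp_eq_precompHomOp_comp_iff (h : M →ₗ[R] N) (k : F →ₗ[Rᵐᵒᵖ] E)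
    (φ : M →ₗ[R] (E →+ G)) (ψ : N →ₗ[R] (F →+ G)) :
    ψ ∘ₗ h = precompHomOp k ∘ₗ φ ↔ ∀ x y, ψ (h x) y = φ x (k y) := by
  simp only [DFunLike.ext_iff]
  rfl

lemma linearSwap_comp_eq_precompHomOp_comp_iff (h : M →ₗ[R] N) (k : F →ₗ[Rᵐᵒᵖ] E)
    (φ : E →ₗ[Rᵐᵒᵖ] (M →+ G)) (ψ : F →ₗ[Rᵐᵒᵖ] (N →+ G)) :
    linearSwap ψ ∘ₗ h = precompHomOp k ∘ₗ linearSwap φ ↔ φ ∘ₗ k = precompHom h ∘ₗ ψ := by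
  simp only [comp_eq_precompHomOp_comp_iff, comp_eq_precompHom_comp_iff, linearSwap_apply]
  exact forall_comm.trans (forall₂_congr fun _ _ => eq_comm)

end Modules

section Representations

variable {R : Type u} [Ring R] {V : Type u} [Quiver.{u} V]
variable (X : RepL V R) (Y : RepR V R) (G : Type u) [AddCommGroup G]

lemma homRepObj_map_toPath {i j : V} (a : i ⟶ j) :
    (HomRepObj V R X G).map a.op.toPath =
      ModuleCat.ofHom (precompHom (G := G) (X.map a.toPath).hom) :=
  Paths.lift_toPath _ a.op

lemma homRepObjOp_map_toPath {i j : V} (a : i ⟶ j) :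
    (HomRepObjOp V R Y G).map a.toPath =
      ModuleCat.ofHom (precompHomOp (G := G) (Y.map a.op.toPath).hom) :=
  Paths.lift_toPath _ a

/-- The swap isomorphism at the vertex `i`, between the components at `i` of morphisms
`Y ⟶ Hom(X, G)` and of morphisms `X ⟶ Hom(Y, G)`. -/
noncomputable def vertexSwap (i : V) :
    (Y.obj (op i) ⟶ (HomRepObj V R X G).obj (op i)) ≃+ (X.obj i ⟶ (HomRepObjOp V R Y G).obj i) :=
  (ModuleCat.homAddEquiv (N := ModuleCat.of Rᵐᵒᵖ (X.obj i →+ G))).trans <|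
    linearSwap.trans (ModuleCat.homAddEquiv (N := ModuleCat.of R (Y.obj (op i) →+ G))).symm

variable {X Y G}

lemma homRepOpEval_vertexSwap (i : V) (φ : Y.obj (op i) ⟶ (HomRepObj V R X G).obj (op i))
    (x : X.obj i) (y : Y.obj (op i)) :
    homRepOpEval Y G (vertexSwap X Y G i φ x) y = homRepEval X G (φ y) x := rfl

lemma naturality_vertexSwap_iff {i j : V} (a : i ⟶ j)
    (φ : Y.obj (op i) ⟶ (HomRepObj V R X G).obj (op i))
    (ψ : Y.obj (op j) ⟶ (HomRepObj V R X G).obj (op j)) :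
    X.map a.toPath ≫ vertexSwap X Y G j ψ =
        vertexSwap X Y G i φ ≫ (HomRepObjOp V R Y G).map a.toPath ↔
      Y.map a.op.toPath ≫ φ = ψ ≫ (HomRepObj V R X G).map a.op.toPath := by
  rw [homRepObj_map_toPath, homRepObjOp_map_toPath, ModuleCat.hom_ext_iff, ModuleCat.hom_ext_iff]
  exact linearSwap_comp_eq_precompHomOp_comp_iff (X.map a.toPath).hom (Y.map a.op.toPath).hom
    φ.hom ψ.hom

/-- The isomorphism `Hom(Y, Hom(X, G)) ≃ Hom(X, Hom(Y, G))` of groups of morphisms of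
representations, given by `vertexSwap` at each vertex. -/
noncomputable def homRepSwap : (Y ⟶ HomRepObj V R X G) ≃+ (X ⟶ HomRepObjOp V R Y G) where
  toFun f := Paths.liftNatTrans (fun i => vertexSwap X Y G i (f.app (op i))) fun a =>
    (naturality_vertexSwap_iff a _ _).2 (f.naturality a.op.toPath)
  invFun g := Paths.liftNatTrans (fun i => (vertexSwap X Y G i.unop).symm (g.app i.unop)) fun a =>
    (naturality_vertexSwap_iff a.unop _ _).1 <| by
      simpa only [AddEquiv.apply_symm_apply] using g.naturality a.unop.toPath
  left_inv f := NatTrans.ext <| funext fun i =>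
    (vertexSwap X Y G i.unop).symm_apply_apply (f.app i)
  right_inv g := NatTrans.ext <| funext fun i =>
    (vertexSwap X Y G i).apply_symm_apply (g.app i)
  map_add' f g := NatTrans.ext <| funext fun i =>
    map_add (vertexSwap X Y G i) (f.app (op i)) (g.app (op i))

lemma homRepOpEval_homRepSwap (f : Y ⟶ HomRepObj V R X G) (i : V) (x : X.obj i)
    (y : Y.obj (op i)) :
    homRepOpEval Y G ((homRepSwap f).app i x) y = homRepEval X G (f.app (op i) y) x :=
  homRepOpEval_vertexSwap i (f.app (op i)) x y

end Representations

end QuiverGF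

theorem stmt6 (R : Type u) [Ring R] (V : Type u) [Quiver.{u} V]
    (X : RepL V R) (Y : RepR V R) (G : Type u) [AddCommGroup G] :
    ∃ e : (Y ⟶ HomRepObj V R X G) ≃+ (X ⟶ HomRepObjOp V R Y G),
      ∀ (f : Y ⟶ HomRepObj V R X G) (i : V) (x : ↑(X.obj i)) (y : ↑(Y.obj (op i))),
        homRepOpEval Y G ((e f).app i x) y = homRepEval X G (f.app (op i) y) x :=
  ⟨homRepSwap, homRepOpEval_homRepSwap⟩

end Statements
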